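/- Let A generate an α-times resolvent family {S_α(t)}_{t≥0} on X, where 1 < α < 2, let r > 0, and let f : [0,r] → X be continuous. If v ∈ C([0,r];X) satisfies (g_α*v)(t) ∈ D(A) and v(t) = A((g_α*v)(t)) + (g_α*f)(t) for all t ∈ [0,r] (i.e. v is a mild solution of D_t^α u = Au + f with u(0) = u'(0) = 0), then v(t) = (P_α*f)(t) = ∫_0^t P_α(t−s)f(s) ds for all t ∈ [0,r]. -/

import Mathlib

open MeasureTheory Set

/-- `g β t = t^(β-1)/Γ(β)`. -/
noncomputable def g (β t : ℝ) : ℝ := t ^ (β - 1) / Real.Gamma β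

/-- `Pa α S t x = (g_{α-1} * S)(t) x = ∫_0^t g_{α-1}(t-s) S(s) x ds`. -/
noncomputable def Pa {X : Type*} [NormedAddCommGroup X] [NormedSpace ℂ X]
    (α : ℝ) (S : ℝ → X →L[ℂ] X) (t : ℝ) (x : X) : X :=
  ∫ s in (0:ℝ)..t, g (α - 1) (t - s) • S s x

/-!
Write `*` for convolution on `[0, t]`. Applying the resolvent equation to the pair
`(g_α * v, v - g_α * f)` in the graph of `A` and convolving gives
`S * g_α * v = 1 * g_α * v + g_α * S * (v - g_α * f)`. Kernels commute by Fubini, so the terms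
containing `S * v` cancel and leave `g_α * (1 * v) = g_α * (g_α * S * f)`. Convolution with `g_α` is
injective on continuous functions, and `g_α = 1 * g_{α-1}`, hence `1 * v = 1 * (g_{α-1} * S * f)`;
differentiating gives `v = g_{α-1} * S * f = P_α * f`.
-/

section Fubini

variable {E : Type*} [NormedAddCommGroup E] [NormedSpace ℝ E]

lemma integral_indicator_Ici {f : ℝ → E} {a b s : ℝ} (hs : s ∈ Ioo a b) :
    ∫ σ in a..b, (Ici s).indicator f σ = ∫ σ in s..b, f σ := by
  have inter_eq : Ioc a b ∩ Ici s = Icc s b := by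
    ext σ
    simp only [mem_inter_iff, mem_Ioc, mem_Ici, mem_Icc]
    exact ⟨fun h => ⟨h.2, h.1.2⟩, fun h => ⟨⟨hs.1.trans_le h.1, h.2⟩, h.1⟩⟩
  rw [intervalIntegral.integral_of_le (hs.1.trans hs.2).le, setIntegral_indicator measurableSet_Ici,
    inter_eq, integral_Icc_eq_integral_Ioc, intervalIntegral.integral_of_le hs.2.le]

lemma integral_integral_triangle_swap {F : ℝ → ℝ → E} {a b : ℝ} (hab : a ≤ b)
    (hF : IntegrableOn F.uncurry (Ioc a b ×ˢ Ioc a b)) :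
    ∫ σ in a..b, ∫ s in a..σ, F s σ = ∫ s in a..b, ∫ σ in s..b, F s σ := by
  set T : Set (ℝ × ℝ) := {p | p.1 ≤ p.2}
  have integrable_indicator : IntegrableOn (T.indicator F.uncurry) (uIoc a b ×ˢ uIoc a b) := by
    rw [uIoc_of_le hab]
    exact hF.indicator (measurableSet_le measurable_fst measurable_snd)
  calc ∫ σ in a..b, ∫ s in a..σ, F s σ
      = ∫ σ in a..b, ∫ s in a..b, T.indicator F.uncurry (s, σ) := by
        refine intervalIntegral.integral_congr fun σ hσ => ?_
        rw [uIcc_of_le hab] at hσ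
        exact (intervalIntegral.integral_indicator hσ).symm
    _ = ∫ s in a..b, ∫ σ in a..b, T.indicator F.uncurry (s, σ) :=
        (intervalIntegral_intervalIntegral_swap
          (F := fun s σ => T.indicator F.uncurry (s, σ)) integrable_indicator).symm
    _ = ∫ s in a..b, ∫ σ in s..b, F s σ := by
        refine intervalIntegral.integral_congr_uIoo fun s hs => ?_
        rw [uIoo_of_le hab] at hs
        exact integral_indicator_Ici hs

lemma integrableOn_prod_smul_of_continuous {k : ℝ → ℝ} {G : ℝ → ℝ → E} {a b c d : ℝ}
    (hk : IntegrableOn k (Icc a b)) (hG : Continuous G.uncurry) :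
    IntegrableOn (fun p : ℝ × ℝ => k p.1 • G p.1 p.2) (Icc a b ×ˢ Icc c d) := by
  have kernel_integrable : IntegrableOn (fun p : ℝ × ℝ => k p.1) (Icc a b ×ˢ Icc c d) := by
    rw [IntegrableOn, Measure.volume_eq_prod, ← Measure.prod_restrict]
    exact Integrable.comp_fst hk _
  exact kernel_integrable.smul_continuousOn hG.continuousOn (isCompact_Icc.prod isCompact_Icc)

lemma integral_integral_smul_triangle_swap {k : ℝ → ℝ} {G : ℝ → ℝ → E} {a b : ℝ} (hab : a ≤ b)
    (hk : IntervalIntegrable k volume a b) (hG : Continuous G.uncurry) :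
    ∫ σ in a..b, ∫ s in a..σ, k s • G s σ = ∫ s in a..b, k s • ∫ σ in s..b, G s σ := by
  rw [intervalIntegrable_iff_integrableOn_Icc_of_le hab] at hk
  rw [integral_integral_triangle_swap (F := fun s σ => k s • G s σ) hab
    ((integrableOn_prod_smul_of_continuous hk hG).mono_set
      (prod_mono Ioc_subset_Icc_self Ioc_subset_Icc_self))]
  simp only [intervalIntegral.integral_smul]

end Fubini

section Convolution

variable {E F : Type*} [NormedAddCommGroup E] [NormedSpace ℝ E]
  [NormedAddCommGroup F] [NormedSpace ℝ F]

/-- The Volterra convolution `(k * u)(t) = ∫₀ᵗ k(t - s) u(s) ds` of a scalar kernel `k` with a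
vector-valued function `u`. -/
noncomputable def scalarConv (k : ℝ → ℝ) (u : ℝ → E) (t : ℝ) : E :=
  ∫ s in (0 : ℝ)..t, k (t - s) • u s

/-- The Volterra convolution `(Φ * u)(t) = ∫₀ᵗ Φ(t - s) u(s) ds` of an operator-valued kernel `Φ`
with a vector-valued function `u`. It is separate from `scalarConv` because scalar kernels may be
singular at `0`, while `Φ` is continuous for the strong operator topology only. -/
noncomputable def opConv (Φ : ℝ → E →L[ℝ] F) (u : ℝ → E) (t : ℝ) : F :=
  ∫ s in (0 : ℝ)..t, Φ (t - s) (u s)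

lemma scalarConv_eq_integral_smul_comp_sub (k : ℝ → ℝ) (u : ℝ → E) (t : ℝ) :
    scalarConv k u t = ∫ s in (0 : ℝ)..t, k s • u (t - s) := by
  simpa [scalarConv] using
    (intervalIntegral.integral_comp_sub_left (a := 0) (b := t) (fun s => k (t - s) • u s) t).symm

lemma scalarConv_congr {k : ℝ → ℝ} {u w : ℝ → E} {t : ℝ} (ht : 0 ≤ t)
    (h : EqOn u w (Icc 0 t)) : scalarConv k u t = scalarConv k w t := by
  refine intervalIntegral.integral_congr fun s hs => ?_
  rw [uIcc_of_le ht] at hs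
  simp only [h hs]

lemma scalarConv_congr_kernel {k l : ℝ → ℝ} {u : ℝ → E} {t : ℝ} (ht : 0 ≤ t)
    (h : EqOn k l (Ioi 0)) : scalarConv k u t = scalarConv l u t := by
  refine intervalIntegral.integral_congr_uIoo fun s hs => ?_
  rw [uIoo_of_le ht] at hs
  simp only [h (sub_pos.2 hs.2)]

lemma intervalIntegrable_scalarConv {k : ℝ → ℝ} {u : ℝ → E} {t : ℝ}
    (hk : IntervalIntegrable k volume 0 t) (hu : Continuous u) :
    IntervalIntegrable (fun s => k (t - s) • u s) volume 0 t := by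
  have reflected : IntervalIntegrable (fun s => k (t - s)) volume 0 t := by
    simpa using (hk.comp_sub_left t).symm
  exact reflected.smul_continuousOn hu.continuousOn

lemma scalarConv_sub {k : ℝ → ℝ} {u w : ℝ → E} {t : ℝ} (hk : IntervalIntegrable k volume 0 t)
    (hu : Continuous u) (hw : Continuous w) :
    scalarConv k (u - w) t = scalarConv k u t - scalarConv k w t := by
  simp only [scalarConv, Pi.sub_apply, smul_sub]
  exact intervalIntegral.integral_sub (intervalIntegrable_scalarConv hk hu)
    (intervalIntegrable_scalarConv hk hw)

lemma continuous_scalarConv {k : ℝ → ℝ} {u : ℝ → E} (hk : ∀ a b, IntervalIntegrable k volume a b)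
    (hu : Continuous u) : Continuous (scalarConv k u) := by
  refine continuous_iff_continuousAt.2 fun t₀ => ?_
  set R := |t₀| + 1
  have abs_lt_R : |t₀| < R := lt_add_one _
  obtain ⟨C, hC⟩ := (isCompact_Icc (a := -(2 * R)) (b := 2 * R)).exists_bound_of_continuousOn
    hu.continuousOn
  have bound : ∀ᶠ t in nhds t₀, ∀ᵐ s ∂volume.restrict (uIoc (-R) R),
      ‖k s • u (t - s)‖ ≤ ‖k s‖ * C := by
    filter_upwards [Icc_mem_nhds (neg_lt_of_abs_lt abs_lt_R) (lt_of_abs_lt abs_lt_R)] with t ht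
    refine (ae_restrict_iff' measurableSet_uIoc).2 (ae_of_all _ fun s hs => ?_)
    rw [uIoc_of_le (by linarith [abs_nonneg t₀])] at hs
    rw [norm_smul]
    gcongr
    exact hC _ ⟨by linarith [ht.1, hs.2], by linarith [ht.2, hs.1]⟩
  have parametric := intervalIntegral.continuousAt_parametric_primitive_of_dominated
    (μ := volume) (F := fun t s => k s • u (t - s)) (x₀ := t₀) (a₀ := 0) (b₀ := t₀) _ (-R) R
    (fun t => (hk _ _).def'.aestronglyMeasurable.smul
      (Continuous.aestronglyMeasurable (by fun_prop)))
    bound ((hk _ _).norm.mul_const C) (ae_of_all _ fun s => by fun_prop)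
    ⟨by linarith [abs_nonneg t₀], by linarith [abs_nonneg t₀]⟩ (abs_lt.1 abs_lt_R)
    Real.volume_singleton
  simp only [funext (scalarConv_eq_integral_smul_comp_sub k u)]
  exact parametric.comp (f := fun t => (t, t)) (by fun_prop)

lemma continuous_opConv {Φ : ℝ → E →L[ℝ] F} {u : ℝ → E}
    (hΦ : Continuous fun p : ℝ × E => Φ p.1 p.2) (hu : Continuous u) :
    Continuous (opConv Φ u) :=
  intervalIntegral.continuous_parametric_intervalIntegral_of_continuous
    (f := fun t s => Φ (t - s) (u s))
    (hΦ.comp (f := fun p : ℝ × ℝ => (p.1 - p.2, u p.2)) (by fun_prop)) continuous_id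

lemma intervalIntegrable_opConv {Φ : ℝ → E →L[ℝ] F} {u : ℝ → E}
    (hΦ : Continuous fun p : ℝ × E => Φ p.1 p.2) (hu : Continuous u) (a b t : ℝ) :
    IntervalIntegrable (fun s => Φ (t - s) (u s)) volume a b :=
  (hΦ.comp (f := fun s => (t - s, u s)) (by fun_prop)).intervalIntegrable a b

lemma opConv_sub {Φ : ℝ → E →L[ℝ] F} {u w : ℝ → E}
    (hΦ : Continuous fun p : ℝ × E => Φ p.1 p.2) (hu : Continuous u) (hw : Continuous w) (t : ℝ) :
    opConv Φ (u - w) t = opConv Φ u t - opConv Φ w t := by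
  simp only [opConv, Pi.sub_apply, map_sub]
  exact intervalIntegral.integral_sub (intervalIntegrable_opConv hΦ hu 0 t t)
    (intervalIntegrable_opConv hΦ hw 0 t t)

lemma opConv_scalarConv [CompleteSpace E] [CompleteSpace F] {k : ℝ → ℝ} {Φ : ℝ → E →L[ℝ] F}
    {u : ℝ → E} {t : ℝ} (ht : 0 ≤ t) (hk : ∀ a b, IntervalIntegrable k volume a b)
    (hΦ : Continuous fun p : ℝ × E => Φ p.1 p.2) (hu : Continuous u) :
    opConv Φ (scalarConv k u) t = scalarConv k (opConv Φ u) t := by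
  have integrand_continuous : Continuous (fun s σ => Φ (t - σ) (u (σ - s))).uncurry :=
    hΦ.comp (f := fun p : ℝ × ℝ => (t - p.2, u (p.2 - p.1))) (by fun_prop)
  calc opConv Φ (scalarConv k u) t
      = ∫ σ in (0 : ℝ)..t, ∫ s in (0 : ℝ)..σ, k s • Φ (t - σ) (u (σ - s)) := by
        refine intervalIntegral.integral_congr fun σ _ => ?_
        simp only [scalarConv_eq_integral_smul_comp_sub, ← map_smul]
        exact (ContinuousLinearMap.intervalIntegral_comp_comm _ ((hk 0 σ).smul_continuousOn
          (Continuous.continuousOn (by fun_prop)))).symm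
    _ = ∫ s in (0 : ℝ)..t, k s • ∫ σ in s..t, Φ (t - σ) (u (σ - s)) :=
        integral_integral_smul_triangle_swap ht (hk 0 t) integrand_continuous
    _ = ∫ s in (0 : ℝ)..t, k s • opConv Φ u (t - s) := by
        refine intervalIntegral.integral_congr fun s _ => ?_
        simpa [opConv] using congrArg (k s • ·) (intervalIntegral.integral_comp_sub_right
          (a := s) (b := t) (fun ρ => Φ (t - s - ρ) (u ρ)) s)
    _ = scalarConv k (opConv Φ u) t := (scalarConv_eq_integral_smul_comp_sub _ _ _).symm

lemma integral_scalarConv [CompleteSpace E] {k : ℝ → ℝ} {u : ℝ → E} {t : ℝ} (ht : 0 ≤ t)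
    (hk : ∀ a b, IntervalIntegrable k volume a b) (hu : Continuous u) :
    ∫ s in (0 : ℝ)..t, scalarConv k u s = scalarConv k (fun s => ∫ τ in (0 : ℝ)..s, u τ) t :=
  opConv_scalarConv (Φ := fun _ => .id ℝ E) ht hk continuous_snd hu

lemma integral_scalarConv_apply_sub {k : ℝ → ℝ} {Φ : ℝ → E →L[ℝ] F} {u : ℝ → E} {t : ℝ}
    (ht : 0 ≤ t) (hk : IntervalIntegrable k volume 0 t)
    (hΦ : Continuous fun p : ℝ × E => Φ p.1 p.2) (hu : Continuous u) :
    ∫ s in (0 : ℝ)..t, scalarConv k (fun τ => Φ τ (u s)) (t - s) = scalarConv k (opConv Φ u) t := by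
  have integrand_continuous : Continuous (fun ρ σ => Φ (σ - ρ) (u (t - σ))).uncurry :=
    hΦ.comp (f := fun p : ℝ × ℝ => (p.2 - p.1, u (t - p.2))) (by fun_prop)
  calc ∫ s in (0 : ℝ)..t, scalarConv k (fun τ => Φ τ (u s)) (t - s)
      = ∫ σ in (0 : ℝ)..t, scalarConv k (fun τ => Φ τ (u (t - σ))) σ := by
        simpa using (intervalIntegral.integral_comp_sub_left (a := 0) (b := t)
          (fun s => scalarConv k (fun τ => Φ τ (u s)) (t - s)) t).symm
    _ = ∫ σ in (0 : ℝ)..t, ∫ ρ in (0 : ℝ)..σ, k ρ • Φ (σ - ρ) (u (t - σ)) := by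
        simp only [scalarConv_eq_integral_smul_comp_sub]
    _ = ∫ ρ in (0 : ℝ)..t, k ρ • ∫ σ in ρ..t, Φ (σ - ρ) (u (t - σ)) :=
        integral_integral_smul_triangle_swap ht hk integrand_continuous
    _ = ∫ ρ in (0 : ℝ)..t, k ρ • opConv Φ u (t - ρ) := by
        refine intervalIntegral.integral_congr fun ρ _ => ?_
        simpa [opConv, sub_right_comm] using congrArg (k ρ • ·)
          (intervalIntegral.integral_comp_sub_left
            (a := ρ) (b := t) (fun s => Φ (t - ρ - s) (u s)) t)
    _ = scalarConv k (opConv Φ u) t := (scalarConv_eq_integral_smul_comp_sub _ _ _).symm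

lemma scalarConv_scalarConv [CompleteSpace E] {k l : ℝ → ℝ} {u : ℝ → E} {t : ℝ} (ht : 0 ≤ t)
    (hk : IntervalIntegrable k volume 0 t) (hl : Continuous l) (hu : Continuous u) :
    scalarConv k (scalarConv l u) t = scalarConv (scalarConv k l) u t := by
  have opConv_smul_id :
      opConv (fun τ => l τ • ContinuousLinearMap.id ℝ E) u = scalarConv l u := rfl
  rw [← opConv_smul_id, ← integral_scalarConv_apply_sub ht hk (Φ := fun τ => l τ • .id ℝ E)
    ((hl.comp continuous_fst).smul continuous_snd) hu]
  refine intervalIntegral.integral_congr fun s _ => ?_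
  simp only [scalarConv, _root_.smul_apply, ContinuousLinearMap.id_apply, smul_smul]
  exact intervalIntegral.integral_smul_const _ _

end Convolution

section RiemannLiouville

lemma g_one : g 1 = fun _ => 1 := by
  ext t
  simp [g]

lemma continuous_g {β : ℝ} (hβ : 1 ≤ β) : Continuous (g β) :=
  (Real.continuous_rpow_const (sub_nonneg.2 hβ)).div_const _

lemma intervalIntegrable_g {β : ℝ} (hβ : 0 < β) (a b : ℝ) : IntervalIntegrable (g β) volume a b :=
  (intervalIntegral.intervalIntegrable_rpow' (by linarith)).div_const _

lemma integral_rpow_mul_sub_rpow {a b t : ℝ} (ha : 0 < a) (hb : 0 < b) (ht : 0 < t) :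
    ∫ x in (0 : ℝ)..t, x ^ (a - 1) * (t - x) ^ (b - 1) =
      t ^ (a + b - 1) * (Real.Gamma a * Real.Gamma b / Real.Gamma (a + b)) := by
  have beta_eq : Complex.betaIntegral a b =
      ((Real.Gamma a * Real.Gamma b / Real.Gamma (a + b) : ℝ) : ℂ) := by
    rw [Complex.betaIntegral_eq_Gamma_mul_div _ _ (by simpa) (by simpa)]
    simp only [← Complex.ofReal_add, Complex.Gamma_ofReal, Complex.ofReal_mul, Complex.ofReal_div]
  have integrand_eq : ∀ x ∈ uIcc 0 t, ((x ^ (a - 1) * (t - x) ^ (b - 1) : ℝ) : ℂ) =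
      (x : ℂ) ^ ((a : ℂ) - 1) * ((t : ℂ) - x) ^ ((b : ℂ) - 1) := by
    intro x hx
    rw [uIcc_of_le ht.le] at hx
    push_cast [Complex.ofReal_cpow hx.1, Complex.ofReal_cpow (sub_nonneg.2 hx.2)]
    rfl
  apply Complex.ofReal_injective
  rw [← intervalIntegral.integral_ofReal, intervalIntegral.integral_congr integrand_eq,
    Complex.betaIntegral_scaled _ _ ht, beta_eq, Complex.ofReal_mul, Complex.ofReal_cpow ht.le]
  push_cast
  rfl

lemma scalarConv_g_g {a b t : ℝ} (ha : 0 < a) (hb : 0 < b) (ht : 0 < t) :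
    scalarConv (g a) (g b) t = g (a + b) t := by
  have hΓa := (Real.Gamma_pos_of_pos ha).ne'
  have hΓb := (Real.Gamma_pos_of_pos hb).ne'
  calc scalarConv (g a) (g b) t
      = (∫ x in (0 : ℝ)..t, x ^ (b - 1) * (t - x) ^ (a - 1)) /
          (Real.Gamma b * Real.Gamma a) := by
        rw [← intervalIntegral.integral_div]
        refine intervalIntegral.integral_congr fun x _ => ?_
        simp only [g, smul_eq_mul]
        ring
    _ = g (a + b) t := by
        rw [integral_rpow_mul_sub_rpow hb ha ht, g, add_comm b a]
        field_simp

variable {E : Type*} [NormedAddCommGroup E] [NormedSpace ℝ E]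

lemma scalarConv_g_one (u : ℝ → E) : scalarConv (g 1) u = fun t => ∫ s in (0 : ℝ)..t, u s := by
  ext t
  simp [scalarConv, g_one]

variable [CompleteSpace E]

lemma scalarConv_g_scalarConv_g {a b t : ℝ} {u : ℝ → E} (ha : 0 < a) (hb : 1 ≤ b) (ht : 0 ≤ t)
    (hu : Continuous u) : scalarConv (g a) (scalarConv (g b) u) t = scalarConv (g (a + b)) u t :=
  (scalarConv_scalarConv ht (intervalIntegrable_g ha 0 t) (continuous_g hb) hu).trans
    (scalarConv_congr_kernel ht fun _ hx => scalarConv_g_g ha (zero_lt_one.trans_le hb) hx)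

lemma integral_scalarConv_g {β t : ℝ} {u : ℝ → E} (hβ : 0 < β) (ht : 0 ≤ t) (hu : Continuous u) :
    ∫ s in (0 : ℝ)..t, scalarConv (g β) u s = scalarConv (g (β + 1)) u t := by
  rw [integral_scalarConv ht (intervalIntegrable_g hβ) hu, ← scalarConv_g_one,
    scalarConv_g_scalarConv_g hβ le_rfl ht hu]

lemma eqOn_Icc_of_eqOn_integral {u w : ℝ → E} {r : ℝ} (hr : 0 < r) (hu : Continuous u)
    (hw : Continuous w)
    (h : EqOn (fun t => ∫ s in (0 : ℝ)..t, u s) (fun t => ∫ s in (0 : ℝ)..t, w s) (Icc 0 r)) :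
    EqOn u w (Icc 0 r) := fun t ht =>
  (uniqueDiffOn_Icc hr t ht).eq_deriv _
    (hu.integral_hasStrictDerivAt 0 t).hasDerivAt.hasDerivWithinAt
    ((hw.integral_hasStrictDerivAt 0 t).hasDerivAt.hasDerivWithinAt.congr h (h ht))

lemma eqOn_Icc_of_eqOn_scalarConv_g_natCast_add_one {u w : ℝ → E} {r : ℝ} (hr : 0 < r)
    (hu : Continuous u) (hw : Continuous w) (n : ℕ)
    (h : EqOn (scalarConv (g (n + 1)) u) (scalarConv (g (n + 1)) w) (Icc 0 r)) :
    EqOn u w (Icc 0 r) := by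
  induction n with
  | zero =>
    simp only [Nat.cast_zero, zero_add, scalarConv_g_one] at h
    exact eqOn_Icc_of_eqOn_integral hr hu hw h
  | succ n ih =>
    have hn : (0 : ℝ) < n + 1 := n.cast_add_one_pos
    refine ih (eqOn_Icc_of_eqOn_integral hr
      (continuous_scalarConv (intervalIntegrable_g hn) hu)
      (continuous_scalarConv (intervalIntegrable_g hn) hw) fun t ht => ?_)
    simp only [integral_scalarConv_g hn ht.1, hu, hw]
    exact_mod_cast h ht

lemma eqOn_Icc_of_eqOn_scalarConv_g {β r : ℝ} {u w : ℝ → E} (hβ : 0 < β) (hr : 0 < r)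
    (hu : Continuous u) (hw : Continuous w)
    (h : EqOn (scalarConv (g β) u) (scalarConv (g β) w) (Icc 0 r)) : EqOn u w (Icc 0 r) := by
  -- Convolving with `g 1` and then with `g (n - β)` raises the order to the integer `n + 1`, where
  -- the convolution is an iterated primitive; the first step makes the inner kernel continuous.
  obtain ⟨n, hn⟩ := exists_nat_gt β
  refine eqOn_Icc_of_eqOn_scalarConv_g_natCast_add_one hr hu hw n fun t ht => ?_
  have raise_order {y : ℝ → E} (hy : Continuous y) : scalarConv (g (n + 1)) y t =
      scalarConv (g (n - β)) (fun s => ∫ τ in (0 : ℝ)..s, scalarConv (g β) y τ) t := by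
    rw [scalarConv_congr ht.1 fun s hs => integral_scalarConv_g hβ hs.1 hy,
      scalarConv_g_scalarConv_g (sub_pos.2 hn) (by linarith) ht.1 hy]
    congr 2
    ring
  rw [raise_order hu, raise_order hw]
  refine scalarConv_congr ht.1 fun s hs => intervalIntegral.integral_congr fun τ hτ => h ?_
  rw [uIcc_of_le hs.1] at hτ
  exact ⟨hτ.1, hτ.2.trans (hs.2.trans ht.2)⟩

end RiemannLiouville

section StronglyContinuous

lemma continuous_apply_of_strongly_continuous {T E F : Type*} [TopologicalSpace T]
    [WeaklyLocallyCompactSpace T] [NormedAddCommGroup E] [NormedSpace ℝ E] [CompleteSpace E]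
    [NormedAddCommGroup F] [NormedSpace ℝ F] {Φ : T → E →L[ℝ] F}
    (hΦ : ∀ x, Continuous fun t => Φ t x) : Continuous fun p : T × E => Φ p.1 p.2 := by
  refine continuous_iff_continuousAt.2 fun ⟨t₀, x₀⟩ => ?_
  obtain ⟨K, hK, hKt₀⟩ := exists_compact_mem_nhds t₀
  obtain ⟨C, hC⟩ : ∃ C, ∀ t : K, ‖Φ t‖ ≤ C := by
    refine banach_steinhaus fun x => ?_
    obtain ⟨C, hC⟩ := hK.exists_bound_of_continuousOn (hΦ x).continuousOn
    exact ⟨C, fun t => hC t t.2⟩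
  have tendsto_increment :
      Filter.Tendsto (fun p : T × E => Φ p.1 (p.2 - x₀)) (nhds (t₀, x₀)) (nhds 0) := by
    have tendsto_bound :
        Filter.Tendsto (fun p : T × E => C * ‖p.2 - x₀‖) (nhds (t₀, x₀)) (nhds 0) := by
      have : Continuous fun p : T × E => C * ‖p.2 - x₀‖ := by fun_prop
      simpa using this.tendsto (t₀, x₀)
    refine squeeze_zero_norm' ?_ tendsto_bound
    filter_upwards [continuous_fst.continuousAt.preimage_mem_nhds hKt₀] with p hp
    exact (Φ p.1).le_of_opNorm_le (hC ⟨p.1, hp⟩) _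
  have tendsto_apply : Filter.Tendsto (fun p : T × E => Φ p.1 x₀) (nhds (t₀, x₀))
      (nhds (Φ t₀ x₀)) := ((hΦ x₀).comp continuous_fst).tendsto (t₀, x₀)
  simpa [ContinuousAt] using tendsto_increment.add tendsto_apply

end StronglyContinuous

section MildSolution

variable {E : Type*} [NormedAddCommGroup E] [NormedSpace ℝ E] [CompleteSpace E]

lemma scalarConv_integral_eq_of_resolvent_eq {k : ℝ → ℝ} {Φ : ℝ → E →L[ℝ] E} {f v : ℝ → E} {t : ℝ}
    (ht : 0 ≤ t) (hk : ∀ a b, IntervalIntegrable k volume a b)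
    (hΦ : Continuous fun p : ℝ × E => Φ p.1 p.2) (hf : Continuous f) (hv : Continuous v)
    (resolvent_eq : ∀ s ∈ Icc 0 t, Φ (t - s) (scalarConv k v s) =
      scalarConv k v s + scalarConv k (fun τ => Φ τ (v s - scalarConv k f s)) (t - s)) :
    scalarConv k (fun s => ∫ τ in (0 : ℝ)..s, v τ) t =
      scalarConv k (scalarConv k (opConv Φ f)) t := by
  have hkf := continuous_scalarConv hk hf
  have hkv := continuous_scalarConv hk hv
  have integrated_resolvent_eq : scalarConv k (opConv Φ (v - scalarConv k f)) t =
      opConv Φ (scalarConv k v) t - ∫ s in (0 : ℝ)..t, scalarConv k v s := by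
    rw [← integral_scalarConv_apply_sub ht (hk 0 t) hΦ (hv.sub hkf), opConv,
      ← intervalIntegral.integral_sub (intervalIntegrable_opConv hΦ hkv 0 t t)
        (hkv.intervalIntegrable 0 t)]
    refine intervalIntegral.integral_congr fun s hs => ?_
    rw [uIcc_of_le ht] at hs
    exact (sub_eq_of_eq_add' (resolvent_eq s hs)).symm
  have expanded : scalarConv k (opConv Φ (v - scalarConv k f)) t =
      opConv Φ (scalarConv k v) t - scalarConv k (scalarConv k (opConv Φ f)) t := by
    calc scalarConv k (opConv Φ (v - scalarConv k f)) t
        = scalarConv k (opConv Φ v - opConv Φ (scalarConv k f)) t := by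
          rw [funext (opConv_sub hΦ hv hkf)]
          rfl
      _ = scalarConv k (opConv Φ v) t - scalarConv k (opConv Φ (scalarConv k f)) t :=
          scalarConv_sub (hk 0 t) (continuous_opConv hΦ hv) (continuous_opConv hΦ hkf)
      _ = opConv Φ (scalarConv k v) t - scalarConv k (scalarConv k (opConv Φ f)) t := by
          rw [opConv_scalarConv ht hk hΦ hv,
            scalarConv_congr ht fun s hs => opConv_scalarConv hs.1 hk hΦ hf]
  rw [← integral_scalarConv ht hk hv]
  exact sub_right_injective (integrated_resolvent_eq.symm.trans expanded)

lemma eqOn_scalarConv_g_opConv_of_resolvent_eq {α r : ℝ} {Φ : ℝ → E →L[ℝ] E} {f v : ℝ → E}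
    (hα : 1 < α) (hr : 0 < r) (hΦ : Continuous fun p : ℝ × E => Φ p.1 p.2) (hf : Continuous f)
    (hv : Continuous v)
    (resolvent_eq : ∀ t ∈ Icc 0 r, ∀ s ∈ Icc 0 r, Φ t (scalarConv (g α) v s) =
      scalarConv (g α) v s +
        scalarConv (g α) (fun τ => Φ τ (v s - scalarConv (g α) f s)) t) :
    EqOn v (scalarConv (g (α - 1)) (opConv Φ f)) (Icc 0 r) := by
  have hα₀ : 0 < α := zero_lt_one.trans hα
  have hΦf := continuous_opConv hΦ hf
  have integral_eq : EqOn (fun t => ∫ s in (0 : ℝ)..t, v s) (scalarConv (g α) (opConv Φ f))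
      (Icc 0 r) := by
    refine eqOn_Icc_of_eqOn_scalarConv_g hα₀ hr
      (intervalIntegral.continuous_primitive hv.intervalIntegrable 0)
      (continuous_scalarConv (intervalIntegrable_g hα₀) hΦf) fun t ht => ?_
    refine scalarConv_integral_eq_of_resolvent_eq ht.1 (intervalIntegrable_g hα₀) hΦ hf hv
      fun s hs => resolvent_eq _ ⟨sub_nonneg.2 hs.2, ?_⟩ s ⟨hs.1, hs.2.trans ht.2⟩
    linarith [hs.1, ht.2]
  refine eqOn_Icc_of_eqOn_integral hr hv
    (continuous_scalarConv (intervalIntegrable_g (sub_pos.2 hα)) hΦf) fun t ht => ?_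
  rw [integral_eq ht]
  simp only [integral_scalarConv_g (sub_pos.2 hα) ht.1 hΦf, sub_add_cancel]

theorem stmt_7_general {α r : ℝ} (hα : 1 < α) (hr : 0 < r) (A : Set (E × E)) (S : ℝ → E →L[ℝ] E)
    (hS : ∀ x, ContinuousOn (fun t => S t x) (Icc 0 r))
    (resolvent_eq : ∀ t ∈ Icc 0 r, ∀ x y, (x, y) ∈ A →
      S t x = x + scalarConv (g α) (fun s => S s y) t)
    {f v : ℝ → E} (hf : ContinuousOn f (Icc 0 r)) (hv : ContinuousOn v (Icc 0 r))
    (mild : ∀ t ∈ Icc 0 r, (scalarConv (g α) v t, v t - scalarConv (g α) f t) ∈ A) :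
    ∀ t ∈ Icc 0 r,
      v t = ∫ s in (0 : ℝ)..t, scalarConv (g (α - 1)) (fun τ => S τ (f s)) (t - s) := by
  let clamp : ℝ → ℝ := fun t => projIcc 0 r hr.le t
  have clamp_eq {t : ℝ} (ht : t ∈ Icc 0 r) : clamp t = t := by simp [clamp, projIcc_of_mem hr.le ht]
  have continuous_clamp {u : ℝ → E} (hu : ContinuousOn u (Icc 0 r)) : Continuous (u ∘ clamp) :=
    hu.comp_continuous (continuous_subtype_val.comp continuous_projIcc) fun t => Subtype.prop _
  have conv_clamp (k : ℝ → ℝ) (u : ℝ → E) {t : ℝ} (ht : t ∈ Icc 0 r) :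
      scalarConv k (u ∘ clamp) t = scalarConv k u t :=
    scalarConv_congr ht.1 fun s hs => congrArg u (clamp_eq ⟨hs.1, hs.2.trans ht.2⟩)
  have hΦ : Continuous fun p : ℝ × E => S (clamp p.1) p.2 :=
    continuous_apply_of_strongly_continuous fun x => continuous_clamp (hS x)
  have v_eq := eqOn_scalarConv_g_opConv_of_resolvent_eq (Φ := S ∘ clamp) hα hr hΦ
    (continuous_clamp hf) (continuous_clamp hv) fun t ht s hs => by
      rw [conv_clamp _ _ hs, conv_clamp _ _ hs]
      simp only [Function.comp_apply, clamp_eq ht, clamp_eq hs]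
      rw [resolvent_eq t ht _ _ (mild s hs)]
      exact congrArg _ (conv_clamp _ (fun τ => S τ _) ht).symm
  intro t ht
  calc v t = scalarConv (g (α - 1)) (opConv (S ∘ clamp) (f ∘ clamp)) t := by
        rw [← v_eq ht, Function.comp_apply, clamp_eq ht]
    _ = ∫ s in (0 : ℝ)..t,
          scalarConv (g (α - 1)) (fun τ => S (clamp τ) (f (clamp s))) (t - s) :=
        (integral_scalarConv_apply_sub ht.1 (intervalIntegrable_g (sub_pos.2 hα) 0 t) hΦ
          (continuous_clamp hf)).symm
    _ = ∫ s in (0 : ℝ)..t, scalarConv (g (α - 1)) (fun τ => S τ (f s)) (t - s) := by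
        refine intervalIntegral.integral_congr fun s hs => ?_
        rw [uIcc_of_le ht.1] at hs
        simp only [clamp_eq ⟨hs.1, hs.2.trans ht.2⟩]
        exact conv_clamp _ (fun τ => S τ (f s)) ⟨sub_nonneg.2 hs.2, by linarith [hs.1, ht.2]⟩

end MildSolution

theorem stmt_7
    {X : Type*} [NormedAddCommGroup X] [NormedSpace ℂ X] [CompleteSpace X]
    (α : ℝ) (hα1 : 1 < α) (hα2 : α < 2)
    (A : X →ₗ.[ℂ] X) (hA_closed : IsClosed (A.graph : Set (X × X)))
    (hA_dense : Dense (A.domain : Set X))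
    (S : ℝ → X →L[ℂ] X)
    (hS_cont : ∀ x : X, ContinuousOn (fun t => S t x) (Ici (0:ℝ)))
    (hS_zero : S 0 = 1)
    (hS_dom : ∀ t : ℝ, 0 ≤ t → ∀ x ∈ A.domain, S t x ∈ A.domain)
    (hS_comm : ∀ t : ℝ, 0 ≤ t → ∀ x y : X, (x, y) ∈ A.graph → (S t x, S t y) ∈ A.graph)
    (hS_eq : ∀ t : ℝ, 0 ≤ t → ∀ x y : X, (x, y) ∈ A.graph →
      S t x = x + ∫ s in (0:ℝ)..t, g α (t - s) • S s y)
    (r : ℝ) (hr : 0 < r) (f : ℝ → X) (hf : ContinuousOn f (Icc 0 r))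
    (v : ℝ → X) (hv : ContinuousOn v (Icc 0 r))
    (hmild : ∀ t ∈ Icc (0:ℝ) r,
      ((∫ s in (0:ℝ)..t, g α (t - s) • v s),
        v t - ∫ s in (0:ℝ)..t, g α (t - s) • f s) ∈ A.graph) :
    ∀ t ∈ Icc (0:ℝ) r, v t = ∫ s in (0:ℝ)..t, Pa α S (t - s) (f s) := by
  exact stmt_7_general hα1 hr A.graph (fun t => (S t).restrictScalars ℝ)
    (fun x => (hS_cont x).mono Icc_subset_Ici_self)
    (fun t ht x y hxy => hS_eq t ht.1 x y hxy) hf hv hmild
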